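/- Let n ∈ ℕ and α a partition of n. The Smith normal form of the submatrix X^(α) = (χ^λ_μ)_{λ,μ ≥ α} of the character table of S_n equals the Smith normal form of the diagonal matrix with entries b_μ for μ ≥ α. -/

import Mathlib

open scoped Classical

namespace SnTable

variable {n : ℕ}

/-- The parts of a partition, listed in weakly decreasing order. -/
def descList (μ : Nat.Partition n) : List ℕ := (μ.parts.sort (· ≤ ·)).reverse

/-- Strict lexicographic order on partitions of `n` (comparing the lists of parts
written in decreasing order). -/
def plex (μ ν : Nat.Partition n) : Prop := List.Lex (· < ·) (descList μ) (descList ν)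

/-- Weak lexicographic order on partitions of `n`. -/
def plexLE (μ ν : Nat.Partition n) : Prop := μ = ν ∨ plex μ ν

/-- `a_μ = ∏ i^{m_i(μ)}`, the product of the parts of `μ`. -/
def aNum (μ : Nat.Partition n) : ℕ := μ.parts.prod

/-- `b_μ = ∏ m_i(μ)!`, the product of the factorials of the multiplicities. -/
def bNum (μ : Nat.Partition n) : ℕ :=
  ∏ i ∈ μ.parts.toFinset, (μ.parts.count i).factorial

/-- `z_μ = a_μ b_μ`, the centralizer order of an element of cycle type `μ` in `S_n`. -/
def zNum (μ : Nat.Partition n) : ℕ := aNum μ * bNum μ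

/-- The cycle type of a permutation of `Fin n`, as a partition of `n`. -/
def cycleTypePartition (g : Equiv.Perm (Fin n)) : Nat.Partition n :=
  (Fintype.card_fin n) ▸ g.partition

/-- The value at `g` of the permutation character `ξ^λ` of `S_n` obtained by inducing the
trivial character from the Young subgroup `S_λ`: it counts the ordered set partitions of
`Fin n` with block sizes `λ₁ ≥ λ₂ ≥ …` that are fixed by `g`. -/
def permChar (lam : Nat.Partition n) (g : Equiv.Perm (Fin n)) : ℕ :=
  Fintype.card {f : Fin n → Fin (descList lam).length //
    (∀ x, f (g x) = f x) ∧
    ∀ j, (Finset.univ.filter fun x => f x = j).card = (descList lam).get j}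

/-- `X` is the character table of the symmetric group `S_n`, with rows and columns indexed
by the partitions of `n`: each row is an irreducible character (as a class function, via
cycle types), distinct rows are distinct characters, and the labelling is the standard one,
pinned down by the fact that the transition matrix expressing the Young permutation
characters `ξ^λ` in terms of the rows of `X` is unitriangular with respect to the
lexicographic order. -/
def IsCharTable (X : Nat.Partition n → Nat.Partition n → ℤ) : Prop :=
  (∀ lam : Nat.Partition n, ∃ V : FDRep ℂ (Equiv.Perm (Fin n)),
      CategoryTheory.Simple V ∧
      ∀ g : Equiv.Perm (Fin n), V.character g = (X lam (cycleTypePartition g) : ℂ)) ∧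
  (∃ d : Nat.Partition n → Nat.Partition n → ℤ,
      (∀ lam, d lam lam = 1) ∧
      (∀ lam mu, d lam mu ≠ 0 → plexLE lam mu) ∧
      (∀ lam (g : Equiv.Perm (Fin n)),
        (permChar lam g : ℤ) = ∑ mu, d lam mu * X mu (cycleTypePartition g))) ∧
  Function.Injective X

/-!
A map on `Fin n` fixed by `g` is a map on the cycles of `g`, so the permutation character `ξ^λ` at
cycle type `μ` counts the ways to merge the parts of `μ` into blocks of sizes `λ₁, λ₂, …`.
Permuting blocks of equal size acts freely on these mergings, so `b_λ` divides row `λ` of the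
table of the `ξ^λ`, and for `μ = λ` the action is simply transitive, so the diagonal entry is
exactly `b_λ`. As merging parts goes up in the lexicographic order, the table is `diag(b)` times a
unitriangular matrix; it is also a unitriangular matrix times the character table. Both
factorizations restrict to the partitions `μ ≥ α`, because these form an upper set.
-/

open Finset

section LabelledPerms

variable {κ γ : Type*}

/-- The group of permutations of `κ` that preserve every fibre of the labelling `c`. When `c`
records the sizes of blocks indexed by `κ`, it permutes the blocks of equal size. -/
def fiberPerms (c : κ → γ) : Subgroup (Equiv.Perm κ) where
  carrier := {σ | c ∘ σ = c}
  one_mem' := rfl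
  mul_mem' {σ τ} hσ hτ := by
    change c ∘ (σ ∘ τ) = c
    rw [← Function.comp_assoc, hσ, hτ]
  inv_mem' {σ} hσ := (Equiv.comp_symm_eq σ c c).2 hσ.symm

theorem eq_of_sameCycle_of_mem_fiberPerms {f : κ → γ} {g : Equiv.Perm κ} (hg : g ∈ fiberPerms f)
    {x y : κ} (hxy : g.SameCycle x y) : f x = f y := by
  obtain ⟨k, rfl⟩ := hxy
  exact (congrFun (zpow_mem hg k) x).symm

theorem card_fiberPerms [Fintype κ] [DecidableEq γ] (c : κ → γ) :
    Nat.card (fiberPerms c) = ∏ y ∈ univ.image c, (#{k | c k = y}).factorial := by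
  simp_rw [← Fintype.card_subtype, ← DomMulAct.stabilizer_card' c, ← Nat.card_eq_fintype_card]
  rfl

end LabelledPerms

section Mergings

variable {ι κ M : Type*} [Fintype ι] [DecidableEq κ] [AddCommMonoid M] {s : ι → M} {c : κ → M}

/-- The ways to merge a family of parts `s` into blocks with prescribed sums `c`, as maps from
the parts to the blocks, bundled with the invariance under permutations of blocks of equal
size. -/
def mergings (s : ι → M) (c : κ → M) : SubMulAction (fiberPerms c) (ι → κ) where
  carrier := {h | ∀ j, ∑ i with h i = j, s i = c j}
  smul_mem' σ h hh j := by
    have hσ : c (σ.1.symm j) = c j := congrFun (inv_mem σ.2) j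
    rw [← hσ, ← hh]
    simp only [Equiv.eq_symm_apply]
    rfl

theorem mem_mergings {h : ι → κ} : h ∈ mergings s c ↔ ∀ j, ∑ i with h i = j, s i = c j :=
  Iff.rfl

theorem equiv_mem_mergings (e : ι ≃ κ) : ⇑e ∈ mergings s c ↔ c ∘ e = s := by
  have fiber (j : κ) : ({i | e i = j} : Finset ι) = {e.symm j} := by
    ext i
    simp [e.eq_symm_apply]
  simp only [mem_mergings, fiber, sum_singleton]
  rw [← Equiv.eq_comp_symm, eq_comm, funext_iff]
  rfl

theorem surjective_of_mem_mergings (hc : ∀ j, c j ≠ 0) {h : ι → κ} (hh : h ∈ mergings s c) :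
    Function.Surjective h := by
  intro j
  obtain ⟨i, hi, -⟩ := exists_ne_zero_of_sum_ne_zero ((hh j).trans_ne (hc j))
  exact ⟨i, (mem_filter.1 hi).2⟩

theorem card_fiberPerms_dvd_card_mergings (hc : ∀ j, c j ≠ 0) :
    Nat.card (fiberPerms c) ∣ Nat.card (mergings s c) := by
  have free (h : mergings s c) : MulAction.stabilizer (fiberPerms c) h = ⊥ := by
    refine (Subgroup.eq_bot_iff_forall _).2 fun σ hσ => Subtype.ext (Equiv.ext fun j => ?_)
    obtain ⟨i, rfl⟩ := surjective_of_mem_mergings hc h.2 j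
    exact congrFun (congrArg Subtype.val hσ) i
  rw [Nat.card_congr (MulAction.selfEquivOrbitsQuotientProd free), Nat.card_prod]
  exact dvd_mul_left _ _

theorem card_mergings_self [Fintype κ] (hc : ∀ j, c j ≠ 0) :
    Nat.card (mergings c c) = Nat.card (fiberPerms c) := by
  symm
  refine Nat.card_eq_of_bijective (fun σ => ⟨σ.1, (equiv_mem_mergings σ.1).2 σ.2⟩) ⟨?_, ?_⟩
  · intro σ τ hστ
    exact Subtype.ext (DFunLike.coe_injective (congrArg Subtype.val hστ))
  · rintro ⟨h, hh⟩
    let σ := Equiv.ofBijective h (surjective_of_mem_mergings hc hh).bijective_of_finite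
    exact ⟨⟨σ, (equiv_mem_mergings σ).1 hh⟩, rfl⟩

theorem sum_filter_le_of_mem_mergings {N : Type*} [AddCommMonoid N] [LinearOrder N]
    [CanonicallyOrderedAdd N] [Fintype κ] {s : ι → N} {c : κ → N} {h : ι → κ}
    (hh : h ∈ mergings s c) (t : N) :
    ∑ i with t ≤ s i, s i ≤ ∑ j with t ≤ c j, c j := by
  have part_le_block (i : ι) : s i ≤ c (h i) := by
    rw [← hh (h i)]
    exact single_le_sum_of_canonicallyOrdered (mem_filter.2 ⟨mem_univ i, rfl⟩)
  calc ∑ i with t ≤ s i, s i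
      ≤ ∑ i with t ≤ c (h i), s i :=
        sum_le_sum_of_subset (monotone_filter_right _ fun i _ hi => hi.trans (part_le_block i))
    _ = ∑ j with t ≤ c j, ∑ i with h i = j, s i := by
        simpa using (sum_fiberwise_eq_sum_filter univ (univ.filter (t ≤ c ·)) h s).symm
    _ = ∑ j with t ≤ c j, c j := sum_congr rfl fun j _ => hh j

end Mergings

theorem filter_two_le_add_replicate_one {s : Multiset ℕ} (hs : ∀ a ∈ s, 0 < a) :
    s.filter (2 ≤ ·) + Multiset.replicate (s.sum - (s.filter (2 ≤ ·)).sum) 1 = s := by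
  have ones : s.filter (¬2 ≤ ·) = Multiset.replicate (s.filter (¬2 ≤ ·)).card 1 := by
    refine Multiset.eq_replicate_card.2 fun a ha => ?_
    have := hs a (Multiset.mem_of_mem_filter ha)
    have := Multiset.of_mem_filter ha
    omega
  have sum_ones : s.sum = (s.filter (2 ≤ ·)).sum + (s.filter (¬2 ≤ ·)).card := by
    conv_lhs => rw [← Multiset.filter_add_not (2 ≤ ·) s, Multiset.sum_add, ones]
    simp
  rw [sum_ones, Nat.add_sub_cancel_left, ← ones, Multiset.filter_add_not]

theorem le_of_forall_sum_filter_le {l₁ l₂ : List ℕ} (h₂ : l₂.Pairwise (· ≥ ·))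
    (pos : ∀ a ∈ l₁, 0 < a)
    (h : ∀ t, (l₁.filter (t ≤ ·)).sum ≤ (l₂.filter (t ≤ ·)).sum) : l₁ ≤ l₂ := by
  induction l₁ generalizing l₂ with
  | nil => exact not_lt.1 (List.not_lt_nil l₂)
  | cons a l₁ ih =>
    obtain ⟨x, hx, hax⟩ : ∃ x ∈ l₂, a ≤ x := by
      by_contra! hlt
      have empty : l₂.filter (a ≤ ·) = [] := by simpa using hlt
      have sum_le := h a
      simp only [empty, List.filter_cons, le_refl, decide_true, if_true, List.sum_cons,
        List.sum_nil] at sum_le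
      have := pos a List.mem_cons_self
      omega
    cases l₂ with
    | nil => simp at hx
    | cons b l₂ =>
      rw [List.pairwise_cons] at h₂
      have hab : a ≤ b := (List.mem_cons.1 hx).elim (fun hxb => hxb ▸ hax) fun hx =>
        hax.trans (h₂.1 x hx)
      obtain hlt | rfl := hab.lt_or_eq
      · exact le_of_lt (List.Lex.rel hlt)
      · refine List.cons_le_cons a (ih h₂.2 (fun x hx => pos x (.tail a hx)) fun t => ?_)
        by_cases hta : t ≤ a <;> simpa [List.filter_cons, hta] using h t

theorem exists_equiv_comp_eq_of_map_univ_eq {A B γ : Type*} [Fintype A] [Fintype B]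
    {u : A → γ} {v : B → γ} (h : univ.val.map u = univ.val.map v) : ∃ e : A ≃ B, v ∘ e = u := by
  have fiber (y : γ) : Nonempty ({a // u a = y} ≃ {b // v b = y}) := by
    refine ⟨Fintype.equivOfCardEq ?_⟩
    have := congrArg (Multiset.count y) h
    simpa only [Multiset.count_map, eq_comm (a := y), Fintype.card_subtype, card_def, filter_val]
      using this
  exact ⟨Equiv.ofFiberEquiv fun y => (fiber y).some, funext (Equiv.ofFiberEquiv_map _)⟩

theorem isUnit_det_of_blockTriangular {ι β R : Type*} [Fintype ι] [DecidableEq ι] [LinearOrder β]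
    [CommRing R] {A : Matrix ι ι R} {b : ι → β} (hb : Function.Injective b)
    (hA : A.BlockTriangular b) (diag : ∀ i, IsUnit (A i i)) : IsUnit A.det := by
  let _ : LinearOrder ι := LinearOrder.lift' b hb
  have : A.IsUpperTriangular := hA
  rw [Matrix.det_of_isUpperTriangular this]
  simp [diag]

section Cycles

variable {α ι : Type*} [Fintype α] [DecidableEq α] {g : Equiv.Perm α} {p : α → ι}

theorem support_cycleOf_eq_fiber [DecidableEq ι] (hp : ∀ x y, p x = p y ↔ g.SameCycle x y) {x : α}
    (hx : x ∈ g.support) : (g.cycleOf x).support = ({y | p y = p x} : Finset α) := by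
  ext y
  rw [Equiv.Perm.mem_support_cycleOf_iff, and_iff_left hx, mem_filter_univ, hp,
    Equiv.Perm.sameCycle_comm]

theorem two_le_card_fiber_iff [DecidableEq ι] (hp : ∀ x y, p x = p y ↔ g.SameCycle x y) (x : α) :
    2 ≤ #{y | p y = p x} ↔ x ∈ g.support := by
  refine ⟨fun h => ?_, fun hx => ?_⟩
  · obtain ⟨y, hy, hyx⟩ := exists_mem_ne h x
    have hxy : g.SameCycle x y := (hp x y).1 (mem_filter.1 hy).2.symm
    exact Equiv.Perm.mem_support.2 fun hfix => hyx (hxy.eq_of_left hfix).symm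
  · rw [← support_cycleOf_eq_fiber hp hx]
    exact (g.isCycle_cycleOf (Equiv.Perm.mem_support.1 hx)).two_le_card_support

theorem filter_two_le_map_card_fiber [Fintype ι] [DecidableEq ι] (surj : Function.Surjective p)
    (hp : ∀ x y, p x = p y ↔ g.SameCycle x y) :
    (univ.val.map fun i => #{x | p x = i}).filter (2 ≤ ·) = g.cycleType := by
  obtain ⟨r, hr⟩ := surj.hasRightInverse
  have mem_support (i : ι) : 2 ≤ #{x | p x = i} ↔ r i ∈ g.support := by
    rw [← two_le_card_fiber_iff hp, hr]
  rw [Multiset.filter_map, ← filter_val, Equiv.Perm.cycleType_def]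
  refine Multiset.map_eq_map_of_bij_of_nodup _ _ (nodup _) (nodup _)
    (fun i _ => g.cycleOf (r i)) ?_ ?_ ?_ ?_
  · intro i hi
    exact Equiv.Perm.cycleOf_mem_cycleFactorsFinset_iff.2 ((mem_support i).1 (mem_filter.1 hi).2)
  · intro i hi j _ hij
    have hi : r i ∈ (g.cycleOf (r j)).support := by
      rw [← hij, Equiv.Perm.mem_support_cycleOf_iff]
      exact ⟨.rfl, (mem_support i).1 (mem_filter.1 hi).2⟩
    rw [← hr i, ← hr j, hp]
    exact (Equiv.Perm.mem_support_cycleOf_iff.1 hi).1.symm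
  · intro c hc
    obtain ⟨x, hx⟩ := (Equiv.Perm.mem_cycleFactorsFinset_iff.1 hc).1.nonempty_support
    have hxr : g.SameCycle x (r (p x)) := (hp _ _).1 (hr (p x)).symm
    have hgx : x ∈ g.support := Equiv.Perm.mem_cycleFactorsFinset_support_le hc hx
    refine ⟨p x, by simpa using (two_le_card_fiber_iff hp x).2 hgx, ?_⟩
    rw [← hxr.cycleOf_eq, ← Equiv.Perm.cycle_is_cycleOf hx hc]
  · intro i hi
    rw [Function.comp_apply,
      support_cycleOf_eq_fiber hp ((mem_support i).1 (mem_filter.1 hi).2), hr]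

theorem map_card_fiber_eq_parts_partition [Fintype ι] [DecidableEq ι] (surj : Function.Surjective p)
    (hp : ∀ x y, p x = p y ↔ g.SameCycle x y) :
    (univ.val.map fun i => #{x | p x = i}) = g.partition.parts := by
  have pos : ∀ a ∈ univ.val.map fun i => #{x | p x = i}, 0 < a := by
    simp only [Multiset.mem_map]
    rintro _ ⟨i, -, rfl⟩
    obtain ⟨x, rfl⟩ := surj i
    exact card_pos.2 ⟨x, by simp⟩
  have sum_eq : (univ.val.map fun i => #{x | p x = i}).sum = Fintype.card α :=
    (card_eq_sum_card_fiberwise fun x _ => mem_univ (p x)).symm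
  rw [← filter_two_le_add_replicate_one pos, filter_two_le_map_card_fiber surj hp, sum_eq,
    Equiv.Perm.sum_cycleType, Equiv.Perm.parts_partition]

end Cycles

section Partitions

theorem coe_descList (μ : Nat.Partition n) : (descList μ : Multiset ℕ) = μ.parts := by
  rw [descList, Multiset.coe_reverse, Multiset.sort_eq]

theorem map_get_descList (μ : Nat.Partition n) : univ.val.map (descList μ).get = μ.parts := by
  rw [Fin.univ_val_map, List.ofFn_get, coe_descList]

theorem pairwise_descList (μ : Nat.Partition n) : (descList μ).Pairwise (· ≥ ·) :=
  List.pairwise_reverse.2 (Multiset.pairwise_sort _ _)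

theorem pos_of_mem_descList {μ : Nat.Partition n} {a : ℕ} (ha : a ∈ descList μ) : 0 < a := by
  rw [← Multiset.mem_coe, coe_descList] at ha
  exact μ.parts_pos ha

theorem get_descList_ne_zero (μ : Nat.Partition n) (i) : (descList μ).get i ≠ 0 :=
  (pos_of_mem_descList (List.get_mem _ i)).ne'

theorem descList_injective : Function.Injective (descList (n := n)) := fun μ ν h =>
  Nat.Partition.ext (by rw [← coe_descList, h, coe_descList])

theorem plexLE_iff {μ ν : Nat.Partition n} : plexLE μ ν ↔ descList μ ≤ descList ν := by
  rw [le_iff_eq_or_lt, descList_injective.eq_iff]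
  rfl

theorem card_fiberPerms_descList (μ : Nat.Partition n) :
    Nat.card (fiberPerms (descList μ).get) = bNum μ := by
  rw [card_fiberPerms, bNum, ← map_get_descList]
  refine prod_congr rfl fun a _ => ?_
  simp only [Multiset.count_map, card_def, filter_val, eq_comm]

theorem sum_filter_get (l : List ℕ) (t : ℕ) :
    ∑ i with t ≤ l.get i, l.get i = (l.filter (t ≤ ·)).sum := by
  conv_rhs => rw [← Multiset.sum_coe, ← Multiset.filter_coe, ← List.ofFn_get l, ← Fin.univ_val_map,
    Multiset.filter_map]
  rfl

/-- The number of ways to merge the parts of `μ` into the parts of `lam`, i.e. the coefficient of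
the monomial symmetric function of `lam` in the power sum of `μ`. -/
noncomputable def mergeCount (μ lam : Nat.Partition n) : ℕ :=
  Nat.card (mergings (descList μ).get (descList lam).get)

theorem bNum_dvd_mergeCount (μ lam : Nat.Partition n) : bNum lam ∣ mergeCount μ lam := by
  rw [← card_fiberPerms_descList]
  exact card_fiberPerms_dvd_card_mergings (get_descList_ne_zero lam)

theorem mergeCount_self (μ : Nat.Partition n) : mergeCount μ μ = bNum μ := by
  rw [← card_fiberPerms_descList]
  exact card_mergings_self (get_descList_ne_zero μ)

theorem plexLE_of_mergeCount_ne_zero {μ lam : Nat.Partition n} (h : mergeCount μ lam ≠ 0) :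
    plexLE μ lam := by
  obtain ⟨⟨f, hf⟩, -⟩ := Nat.card_ne_zero.1 h
  refine plexLE_iff.2 (le_of_forall_sum_filter_le (pairwise_descList lam)
    (fun _ => pos_of_mem_descList) fun t => ?_)
  simpa only [sum_filter_get] using sum_filter_le_of_mem_mergings hf t

theorem parts_cycleTypePartition (g : Equiv.Perm (Fin n)) :
    (cycleTypePartition g).parts = g.partition.parts := by
  have cast_parts {m : ℕ} (h : m = n) (p : Nat.Partition m) :
      (h ▸ p : Nat.Partition n).parts = p.parts := by
    subst h
    rfl
  exact cast_parts _ _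

theorem cycleTypePartition_surjective : Function.Surjective (cycleTypePartition (n := n)) := by
  intro μ
  have rebuild := filter_two_le_add_replicate_one fun _ => μ.parts_pos
  have sum_le : (μ.parts.filter (2 ≤ ·)).sum ≤ Fintype.card (Fin n) :=
    calc (μ.parts.filter (2 ≤ ·)).sum
        ≤ μ.parts.sum := le_self_add.trans_eq (by rw [← Multiset.sum_add, rebuild])
      _ = Fintype.card (Fin n) := by rw [μ.parts_sum, Fintype.card_fin]
  obtain ⟨g, hg⟩ := (Equiv.Perm.exists_with_cycleType_iff (Fin n)).2
    ⟨sum_le, fun _ => Multiset.of_mem_filter⟩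
  refine ⟨g, Nat.Partition.ext ?_⟩
  rw [parts_cycleTypePartition, Equiv.Perm.parts_partition, ← Equiv.Perm.sum_cycleType, hg,
    Fintype.card_fin]
  rwa [μ.parts_sum] at rebuild

theorem exists_cycle_labelling (g : Equiv.Perm (Fin n)) :
    ∃ p : Fin n → Fin (descList (cycleTypePartition g)).length,
      (∀ x y, p x = p y ↔ g.SameCycle x y) ∧
      ∀ i, #{x | p x = i} = (descList (cycleTypePartition g)).get i := by
  let q : Fin n → Quotient (Equiv.Perm.SameCycle.setoid g) := Quotient.mk _
  have hq (x y) : q x = q y ↔ g.SameCycle x y := Quotient.eq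
  have sizes : (univ.val.map fun c => #{x | q x = c}) =
      univ.val.map (descList (cycleTypePartition g)).get := by
    rw [map_card_fiber_eq_parts_partition Quotient.mk_surjective hq, map_get_descList,
      parts_cycleTypePartition]
  obtain ⟨e, he⟩ := exists_equiv_comp_eq_of_map_univ_eq sizes
  refine ⟨e ∘ q, fun x y => e.injective.eq_iff.trans (hq x y), e.surjective.forall.2 fun c => ?_⟩
  simpa using (congrFun he c).symm

theorem permChar_eq_mergeCount (lam : Nat.Partition n) (g : Equiv.Perm (Fin n)) :
    permChar lam g = mergeCount (cycleTypePartition g) lam := by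
  obtain ⟨p, hp, size⟩ := exists_cycle_labelling g
  have p_surj : Function.Surjective p := fun i => by
    obtain ⟨x, hx⟩ := card_ne_zero.1 ((size i).trans_ne (get_descList_ne_zero _ i))
    exact ⟨x, (mem_filter.1 hx).2⟩
  have mem_iff (h : Fin (descList (cycleTypePartition g)).length → Fin (descList lam).length) :
      h ∈ mergings (descList (cycleTypePartition g)).get (descList lam).get ↔
        ∀ j, #{x | h (p x) = j} = (descList lam).get j := by
    simp only [mem_mergings, ← size, sum_card_fiberwise_eq_card_filter, mem_filter_univ]
  rw [permChar, ← Nat.card_eq_fintype_card]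
  symm
  refine Nat.card_eq_of_bijective (fun h => ⟨h.1 ∘ p, fun x => ?_, (mem_iff h.1).1 h.2⟩) ⟨?_, ?_⟩
  · exact congrArg h.1 ((hp _ _).2 (Equiv.Perm.sameCycle_apply_left.2 .rfl))
  · intro h k hhk
    exact Subtype.ext (p_surj.injective_comp_right (congrArg Subtype.val hhk))
  · rintro ⟨f, hf, f_size⟩
    obtain ⟨r, hr⟩ := p_surj.hasRightInverse
    have factor (x : Fin n) : f (r (p x)) = f x :=
      eq_of_sameCycle_of_mem_fiberPerms (funext hf) ((hp _ _).1 (hr (p x)))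
    exact ⟨⟨f ∘ r, (mem_iff _).2 (by simpa [factor] using f_size)⟩, Subtype.ext (funext factor)⟩

end Partitions

theorem exists_isUnit_det_mergeCount_eq_diagonal_mul (R : Type*) [CommRing R] {ι : Type*}
    [Fintype ι] [DecidableEq ι] {φ : ι → Nat.Partition n} (hφ : Function.Injective φ) :
    ∃ W : Matrix ι ι R, IsUnit W.det ∧
      Matrix.of (fun i j => (mergeCount (φ j) (φ i) : R)) =
        Matrix.diagonal (fun i => (bNum (φ i) : R)) * W := by
  choose w hw using fun i j => bNum_dvd_mergeCount (φ j) (φ i)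
  have bNum_ne_zero (μ : Nat.Partition n) : bNum μ ≠ 0 :=
    prod_ne_zero_iff.2 fun _ _ => Nat.factorial_ne_zero _
  refine ⟨Matrix.of fun i j => (w i j : R), ?_, ?_⟩
  · rw [← Matrix.det_transpose]
    refine isUnit_det_of_blockTriangular (b := descList ∘ φ) (descList_injective.comp hφ)
      (fun i j hij => ?_) fun i => ?_
    · have : mergeCount (φ i) (φ j) = 0 := by
        by_contra hne
        exact hij.not_ge (plexLE_iff.1 (plexLE_of_mergeCount_ne_zero hne))
      have : w j i = 0 := by simpa [hw, bNum_ne_zero] using this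
      simp [this]
    · have : w i i = 1 := by simpa [mergeCount_self, bNum_ne_zero] using hw i i
      simp [this]
  · ext i j
    simp [Matrix.diagonal_mul, hw]

theorem transition_mul_submatrix_eq_mergeCount {R : Type*} [NonAssocSemiring R]
    {X d : Nat.Partition n → Nat.Partition n → R} (hd : ∀ lam mu, d lam mu ≠ 0 → plexLE lam mu)
    (hX : ∀ lam g, (permChar lam g : R) = ∑ mu, d lam mu * X mu (cycleTypePartition g))
    (α : Nat.Partition n) :
    Matrix.of (fun lam mu : {μ // plexLE α μ} => d lam.1 mu.1) *
        Matrix.of (fun lam mu : {μ // plexLE α μ} => X lam.1 mu.1) =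
      Matrix.of fun lam mu : {μ // plexLE α μ} => (mergeCount mu.1 lam.1 : R) := by
  ext lam mu
  obtain ⟨g, hg⟩ := cycleTypePartition_surjective mu.1
  have upper_set (nu) (hnu : d lam.1 nu ≠ 0) : plexLE α nu :=
    plexLE_iff.2 ((plexLE_iff.1 lam.2).trans (plexLE_iff.1 (hd _ _ hnu)))
  calc ∑ nu : {μ // plexLE α μ}, d lam.1 nu.1 * X nu.1 mu.1
      = ∑ nu with plexLE α nu, d lam.1 nu * X nu mu.1 :=
        (sum_subtype _ (by simp) fun nu => d lam.1 nu * X nu mu.1).symm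
    _ = ∑ nu, d lam.1 nu * X nu mu.1 :=
        sum_filter_of_ne fun nu _ hne => upper_set nu (left_ne_zero_of_mul hne)
    _ = permChar lam.1 g := by rw [hX, hg]
    _ = mergeCount mu.1 lam.1 := by rw [permChar_eq_mergeCount, hg]

theorem snf_large_submatrix_general {R : Type*} [CommRing R]
    (X d : Nat.Partition n → Nat.Partition n → R) (hd_diag : ∀ lam, IsUnit (d lam lam))
    (hd : ∀ lam mu, d lam mu ≠ 0 → plexLE lam mu)
    (hX : ∀ lam g, (permChar lam g : R) = ∑ mu, d lam mu * X mu (cycleTypePartition g))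
    (α : Nat.Partition n) :
    ∃ U V : Matrix {μ : Nat.Partition n // plexLE α μ} {μ : Nat.Partition n // plexLE α μ} R,
      IsUnit U.det ∧ IsUnit V.det ∧
      U * (Matrix.of fun lam mu : {μ : Nat.Partition n // plexLE α μ} => X lam.1 mu.1) * V =
        Matrix.diagonal fun μ : {μ : Nat.Partition n // plexLE α μ} => (bNum μ.1 : R) := by
  let D : Matrix {μ // plexLE α μ} {μ // plexLE α μ} R := Matrix.of fun lam mu => d lam.1 mu.1
  have hD : IsUnit D.det := by
    refine isUnit_det_of_blockTriangular (b := fun μ => descList μ.1)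
      (descList_injective.comp Subtype.val_injective) (fun lam mu hlt => ?_) fun _ => hd_diag _
    by_contra hne
    exact hlt.not_ge (plexLE_iff.1 (hd _ _ hne))
  obtain ⟨W, hW, hPW⟩ := exists_isUnit_det_mergeCount_eq_diagonal_mul R
    (Subtype.val_injective (p := fun μ : Nat.Partition n => plexLE α μ))
  refine ⟨D, W⁻¹, hD, Matrix.isUnit_nonsing_inv_det_iff.2 hW, ?_⟩
  rw [transition_mul_submatrix_eq_mergeCount hd hX, hPW, Matrix.mul_assoc,
    Matrix.mul_nonsing_inv _ hW, Matrix.mul_one]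

/-- **Theorem 3.1 (Smith normal form part).** For a partition `α` of `n`, the Smith normal form
of the submatrix `X^(α) = (χ^λ_μ)_{λ,μ ≥ α}` of the character table of `S_n` equals the Smith
normal form of the diagonal matrix with entries `b_μ`, `μ ≥ α`; equivalently, the two matrices
are equivalent over `ℤ` via unimodular transformations. -/
theorem snf_large_submatrix (n : ℕ) (X : Nat.Partition n → Nat.Partition n → ℤ)
    (hX : IsCharTable X) (α : Nat.Partition n) :
    ∃ U V : Matrix {μ : Nat.Partition n // plexLE α μ} {μ : Nat.Partition n // plexLE α μ} ℤ,
      IsUnit U.det ∧ IsUnit V.det ∧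
      U * (Matrix.of fun lam mu : {μ : Nat.Partition n // plexLE α μ} => X lam.1 mu.1) * V =
        Matrix.diagonal fun μ : {μ : Nat.Partition n // plexLE α μ} => (bNum μ.1 : ℤ) := by
  obtain ⟨-, ⟨d, hd_diag, hd, hX⟩, -⟩ := hX
  exact snf_large_submatrix_general X d (fun lam => hd_diag lam ▸ isUnit_one) hd hX α

end SnTable
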